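/- Mutual information of a Gaussian linear channel: let Y ~ N(0, Σ_Y) on ℝ^{d_Y} with Σ_Y positive definite, let n ~ N(0, Σ_n) on ℝ^d with Σ_n positive definite, independent of Y, let H be a real d × d_Y matrix, and set X = H Y + n. Then I(X; Y) = (1/2) · log( det(H Σ_Y Hᵀ + Σ_n) / det Σ_n ). -/

import Mathlib

/-!
For a channel `X = f(Y) + N` whose noise `N` is independent of `Y`, the conditional law of `X` given
`Y = y` is a translate of the law of `N`. In terms of densities this gives `I(X; Y) = h(X) - h(N)`
with `h` the differential entropy, whatever the law of `Y` is. If `N ~ N(0, Σ_n)`, `Y` is Gaussian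
and `f = H` is linear, then `X` is Gaussian with covariance `H Σ_Y Hᵀ + Σ_n`, and the entropy of a
Gaussian with covariance `S` on `ℝ^d` is `(1/2) log ((2πe)^d det S)`: the quadratic form `xᵀ S⁻¹ x`
in the log-density has mean `tr (S⁻¹ S) = d`.
-/

open MeasureTheory Matrix

open Classical in
/-- Kullback–Leibler divergence `KL(P ‖ Q)`, valued in `EReal`. -/
noncomputable def klDiv {α : Type*} [MeasurableSpace α] (P Q : Measure α) : EReal :=
  if P ≪ Q ∧ Integrable (fun x => Real.log (P.rnDeriv Q x).toReal) P
  then ((∫ x, Real.log (P.rnDeriv Q x).toReal ∂P : ℝ) : EReal)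
  else ⊤

/-- Mutual information of a measure on a product space: `I(P) := KL(P ‖ P₁ ⊗ P₂)`. -/
noncomputable def mutualInfo {α β : Type*} [MeasurableSpace α] [MeasurableSpace β]
    (P : Measure (α × β)) : EReal :=
  klDiv P ((P.map Prod.fst).prod (P.map Prod.snd))

/-- Mutual information `I(X; Y)` of two random variables: `KL(law (X,Y) ‖ law X ⊗ law Y)`. -/
noncomputable def miRV {Ω α β : Type*} [MeasurableSpace Ω] [MeasurableSpace α]
    [MeasurableSpace β] (P : Measure Ω) (X : Ω → α) (Y : Ω → β) : EReal :=
  mutualInfo (P.map fun ω => (X ω, Y ω))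

/-- The multivariate Gaussian measure `N(m, S)` on `ι → ℝ`, defined by its density
with respect to Lebesgue measure. -/
noncomputable def mvGaussian {ι : Type*} [Fintype ι] [DecidableEq ι]
    (m : ι → ℝ) (S : Matrix ι ι ℝ) : Measure (ι → ℝ) :=
  volume.withDensity fun x =>
    ENNReal.ofReal ((Real.sqrt ((2 * Real.pi) ^ (Fintype.card ι) * S.det))⁻¹ *
      Real.exp (-(1/2) * ((x - m) ⬝ᵥ (S⁻¹ *ᵥ (x - m)))))

section

open ProbabilityTheory WithLp
open scoped ENNReal

section Density

variable {α β : Type*} [MeasurableSpace α] [MeasurableSpace β]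

lemma map_withDensity_comp {μ : Measure α} {ν : Measure β} {e : α → β}
    (he : MeasurePreserving e μ ν) {g : β → ℝ≥0∞} (hg : Measurable g) :
    (μ.withDensity (g ∘ e)).map e = ν.withDensity g := by
  ext s hs
  rw [Measure.map_apply he.measurable hs, withDensity_apply _ (he.measurable hs),
    withDensity_apply _ hs, ← he.map_eq, setLIntegral_map hs hg he.measurable]
  rfl

lemma pi_withDensity_ofReal {ι : Type*} [Fintype ι] {E : ι → Type*} [∀ i, MeasurableSpace (E i)]
    {μ : ∀ i, Measure (E i)} [∀ i, SigmaFinite (μ i)] {f : ∀ i, E i → ℝ}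
    (hf_nonneg : ∀ i x, 0 ≤ f i x) (hf : ∀ i, Integrable (f i) (μ i)) :
    Measure.pi (fun i ↦ (μ i).withDensity fun x ↦ ENNReal.ofReal (f i x)) =
      (Measure.pi μ).withDensity fun x ↦ ENNReal.ofReal (∏ i, f i (x i)) := by
  refine Measure.pi_eq fun s hs ↦ ?_
  have hfs (i : ι) : Integrable (f i) ((μ i).restrict (s i)) := (hf i).restrict
  rw [withDensity_apply _ (.univ_pi hs), Measure.restrict_pi_pi,
    ← ofReal_integral_eq_lintegral_ofReal (Integrable.fintype_prod_dep hfs)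
      (.of_forall fun x ↦ Finset.prod_nonneg fun i _ ↦ hf_nonneg i (x i)),
    integral_fintype_prod_eq_prod,
    ENNReal.ofReal_prod_of_nonneg fun i _ ↦ integral_nonneg (hf_nonneg i)]
  refine Finset.prod_congr rfl fun i _ ↦ ?_
  rw [withDensity_apply _ (hs i),
    ofReal_integral_eq_lintegral_ofReal (hfs i) (.of_forall (hf_nonneg i))]

lemma withDensity_ofReal_eq_withDensity_div {μ : Measure α} {p q : α → ℝ} (hp : Measurable p)
    (hq : Measurable q) (hq_pos : ∀ x, 0 < q x) :
    μ.withDensity (fun x ↦ ENNReal.ofReal (p x)) =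
      (μ.withDensity fun x ↦ ENNReal.ofReal (q x)).withDensity
        fun x ↦ ENNReal.ofReal (p x / q x) := by
  have hdiv : Measurable fun x ↦ ENNReal.ofReal (p x / q x) := (hp.div hq).ennreal_ofReal
  rw [← withDensity_mul _ hq.ennreal_ofReal hdiv]
  congr with x
  rw [Pi.mul_apply, ← ENNReal.ofReal_mul (hq_pos x).le, mul_div_cancel₀ _ (hq_pos x).ne']

lemma withDensity_ofReal_absolutelyContinuous {μ : Measure α} {p q : α → ℝ} (hp : Measurable p)
    (hq : Measurable q) (hq_pos : ∀ x, 0 < q x) :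
    μ.withDensity (fun x ↦ ENNReal.ofReal (p x)) ≪
      μ.withDensity fun x ↦ ENNReal.ofReal (q x) := by
  rw [withDensity_ofReal_eq_withDensity_div hp hq hq_pos]
  exact withDensity_absolutelyContinuous _ _

lemma log_rnDeriv_withDensity_ofReal {μ : Measure α} [SigmaFinite μ] {p q : α → ℝ}
    (hp : Measurable p) (hq : Measurable q) (hq_pos : ∀ x, 0 < q x) :
    (fun x ↦ Real.log (((μ.withDensity fun x ↦ ENNReal.ofReal (p x)).rnDeriv
        (μ.withDensity fun x ↦ ENNReal.ofReal (q x)) x).toReal))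
      =ᵐ[μ.withDensity fun x ↦ ENNReal.ofReal (p x)] fun x ↦ Real.log (p x) - Real.log (q x) := by
  have hrn : (μ.withDensity fun x ↦ ENNReal.ofReal (p x)).rnDeriv
      (μ.withDensity fun x ↦ ENNReal.ofReal (q x))
        =ᵐ[μ.withDensity fun x ↦ ENNReal.ofReal (q x)] fun x ↦ ENNReal.ofReal (p x / q x) := by
    rw [withDensity_ofReal_eq_withDensity_div hp hq hq_pos]
    exact Measure.rnDeriv_withDensity _ (hp.div hq).ennreal_ofReal
  have hp_pos : ∀ᵐ x ∂μ.withDensity fun x ↦ ENNReal.ofReal (p x), 0 < p x := by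
    rw [ae_withDensity_iff hp.ennreal_ofReal]
    exact .of_forall fun x hx ↦ by simpa using hx
  filter_upwards [(withDensity_ofReal_absolutelyContinuous hp hq hq_pos).ae_le hrn, hp_pos]
    with x hx hpx
  rw [hx, ENNReal.toReal_ofReal (div_pos hpx (hq_pos x)).le,
    Real.log_div hpx.ne' (hq_pos x).ne']

theorem klDiv_withDensity_ofReal {μ : Measure α} [SigmaFinite μ] {p q : α → ℝ}
    (hp : Measurable p) (hq : Measurable q) (hq_pos : ∀ x, 0 < q x)
    (hint : Integrable (fun x ↦ Real.log (p x) - Real.log (q x))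
      (μ.withDensity fun x ↦ ENNReal.ofReal (p x))) :
    klDiv (μ.withDensity fun x ↦ ENNReal.ofReal (p x))
        (μ.withDensity fun x ↦ ENNReal.ofReal (q x)) =
      ((∫ x, (Real.log (p x) - Real.log (q x))
        ∂μ.withDensity fun x ↦ ENNReal.ofReal (p x) : ℝ) : EReal) := by
  have hlog := log_rnDeriv_withDensity_ofReal (μ := μ) hp hq hq_pos
  rw [klDiv, if_pos ⟨withDensity_ofReal_absolutelyContinuous hp hq hq_pos, hint.congr hlog.symm⟩,
    integral_congr_ae hlog]

lemma mutualInfo_withDensity_ofReal {μ : Measure α} [SigmaFinite μ] {ν : Measure β} [SigmaFinite ν]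
    {p : α × β → ℝ} {q : α → ℝ} (hp : Measurable p) (hq : Measurable q) (hq_pos : ∀ x, 0 < q x)
    (hfst : ((μ.prod ν).withDensity fun z ↦ ENNReal.ofReal (p z)).map Prod.fst =
      μ.withDensity fun x ↦ ENNReal.ofReal (q x))
    (hsnd : ((μ.prod ν).withDensity fun z ↦ ENNReal.ofReal (p z)).map Prod.snd = ν)
    (hint : Integrable (fun z ↦ Real.log (p z) - Real.log (q z.1))
      ((μ.prod ν).withDensity fun z ↦ ENNReal.ofReal (p z))) :
    mutualInfo ((μ.prod ν).withDensity fun z ↦ ENNReal.ofReal (p z)) =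
      ((∫ z, (Real.log (p z) - Real.log (q z.1))
        ∂(μ.prod ν).withDensity fun z ↦ ENNReal.ofReal (p z) : ℝ) : EReal) := by
  rw [mutualInfo, hfst, hsnd, prod_withDensity_left hq.ennreal_ofReal]
  exact klDiv_withDensity_ofReal hp (hq.comp measurable_fst) (fun z ↦ hq_pos z.1) hint

/-- Differential entropy `-∫ p log p dμ` of the probability density `p` with respect to `μ`, written
as the mean of `-log p` under the law with density `p`. As for any Bochner integral, the value is
`0` when `log p` is not integrable under that law. -/
noncomputable def differentialEntropy (μ : Measure α) (p : α → ℝ) : ℝ :=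
  -∫ x, Real.log (p x) ∂μ.withDensity fun x ↦ ENNReal.ofReal (p x)

end Density

section AdditiveNoise

variable {Ω β G : Type*} [MeasurableSpace Ω] [MeasurableSpace β] [MeasurableSpace G] [AddGroup G]
  [MeasurableAdd₂ G]

lemma measurePreserving_add_comp_prodMk {μ : Measure G} [SFinite μ] [μ.IsAddLeftInvariant]
    (ν : Measure β) [SFinite ν] {f : β → G} (hf : Measurable f) :
    MeasurePreserving (fun p : β × G ↦ (f p.1 + p.2, p.1)) (ν.prod μ) (μ.prod ν) :=
  Measure.measurePreserving_swap.comp <|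
    (MeasurePreserving.id ν).skew_product (g := fun y z ↦ f y + z)
      ((hf.comp measurable_fst).add measurable_snd)
      (.of_forall fun y ↦ map_add_left_eq_self μ (f y))

variable [MeasurableNeg G] {P : Measure Ω} [IsFiniteMeasure P] {μ : Measure G} [SigmaFinite μ]
  [μ.IsAddLeftInvariant] {Y : Ω → β} {N : Ω → G} {f : β → G}

lemma hasLaw_add_comp_prodMk {ν : Measure β} [SFinite ν] {g : G → ℝ≥0∞} (hf : Measurable f)
    (hg : Measurable g) (hY : HasLaw Y ν P) (hN : HasLaw N (μ.withDensity g) P)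
    (hindep : IndepFun Y N P) :
    HasLaw (fun ω ↦ (f (Y ω) + N ω, Y ω))
      ((μ.prod ν).withDensity fun z ↦ g (-f z.2 + z.1)) P := by
  have hshear := measurePreserving_add_comp_prodMk (μ := μ) ν hf
  have hdensity : Measurable fun z : G × β ↦ g (-f z.2 + z.1) := by fun_prop
  have hlaw : HasLaw (fun z : β × G ↦ (f z.1 + z.2, z.1))
      ((μ.prod ν).withDensity fun z ↦ g (-f z.2 + z.1)) (ν.prod (μ.withDensity g)) := by
    refine ⟨hshear.measurable.aemeasurable, ?_⟩
    rw [prod_withDensity_right hg, ← map_withDensity_comp hshear hdensity]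
    congr 2 with z
    simp only [Function.comp_apply, neg_add_cancel_left]
  exact hlaw.fun_comp (hindep.hasLaw_prod hY hN)

theorem miRV_add_eq_differentialEntropy_sub {g h : G → ℝ} (hf : Measurable f) (hg : Measurable g)
    (hh : Measurable h) (hh_pos : ∀ x, 0 < h x) (hY : AEMeasurable Y P)
    (hN : HasLaw N (μ.withDensity fun x ↦ ENNReal.ofReal (g x)) P)
    (hX : HasLaw (fun ω ↦ f (Y ω) + N ω) (μ.withDensity fun x ↦ ENNReal.ofReal (h x)) P)
    (hindep : IndepFun Y N P)
    (hg_int : Integrable (fun x ↦ Real.log (g x)) (μ.withDensity fun x ↦ ENNReal.ofReal (g x)))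
    (hh_int : Integrable (fun x ↦ Real.log (h x)) (μ.withDensity fun x ↦ ENNReal.ofReal (h x))) :
    miRV P (fun ω ↦ f (Y ω) + N ω) Y =
      ((differentialEntropy μ h - differentialEntropy μ g : ℝ) : EReal) := by
  have hYlaw : HasLaw Y (P.map Y) P := ⟨hY, rfl⟩
  have hjoint := hasLaw_add_comp_prodMk (g := fun x ↦ ENNReal.ofReal (g x)) hf hg.ennreal_ofReal
    hYlaw hN hindep
  have hfst := HasLaw.comp_of_hasLaw_comp measurable_fst.aemeasurable hjoint .id hX
  have hsnd := HasLaw.comp_of_hasLaw_comp measurable_snd.aemeasurable hjoint .id hYlaw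
  have hnoise := HasLaw.comp_of_hasLaw_comp (f := fun z : G × β ↦ -f z.2 + z.1) (by fun_prop)
    hjoint .id (by simpa only [neg_add_cancel_left] using hN)
  have hg_int_joint := (hnoise.map_eq ▸ hg_int).comp_aemeasurable hnoise.aemeasurable
  have hh_int_joint := (hfst.map_eq ▸ hh_int).comp_aemeasurable hfst.aemeasurable
  have hg_mean := hnoise.integral_comp hg_int.aestronglyMeasurable
  have hh_mean := hfst.integral_comp hh_int.aestronglyMeasurable
  rw [miRV, hjoint.map_eq, mutualInfo_withDensity_ofReal (p := fun z ↦ g (-f z.2 + z.1))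
    (by fun_prop) hh hh_pos hfst.map_eq hsnd.map_eq (hg_int_joint.sub hh_int_joint)]
  simp only [Function.comp_def, id] at hg_int_joint hh_int_joint hg_mean hh_mean
  rw [integral_sub hg_int_joint hh_int_joint, hg_mean, hh_mean, differentialEntropy,
    differentialEntropy, neg_sub_neg]

end AdditiveNoise

section MvGaussian

variable {ι : Type*} [Fintype ι] [DecidableEq ι] {S : Matrix ι ι ℝ}

/-- The Lebesgue density of `mvGaussian m S`. It is a probability density when `S` is positive
definite; for singular `S` the factor `(√0)⁻¹` makes it `0`. -/
noncomputable def mvGaussianPDFReal (m : ι → ℝ) (S : Matrix ι ι ℝ) (x : ι → ℝ) : ℝ :=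
  (√((2 * Real.pi) ^ Fintype.card ι * S.det))⁻¹ *
    Real.exp (-(1 / 2) * ((x - m) ⬝ᵥ (S⁻¹ *ᵥ (x - m))))

lemma mvGaussian_eq_withDensity (m : ι → ℝ) (S : Matrix ι ι ℝ) :
    mvGaussian m S = volume.withDensity fun x ↦ ENNReal.ofReal (mvGaussianPDFReal m S x) := rfl

lemma measurable_mvGaussianPDFReal (m : ι → ℝ) (S : Matrix ι ι ℝ) :
    Measurable (mvGaussianPDFReal m S) := by
  unfold mvGaussianPDFReal
  exact Continuous.measurable (by fun_prop)

lemma mvGaussianPDFReal_pos (m : ι → ℝ) (hS : S.PosDef) (x : ι → ℝ) :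
    0 < mvGaussianPDFReal m S x := by
  have := hS.det_pos
  unfold mvGaussianPDFReal
  positivity

lemma log_mvGaussianPDFReal (m : ι → ℝ) (hS : S.PosDef) (x : ι → ℝ) :
    Real.log (mvGaussianPDFReal m S x) =
      -(1 / 2) * (Real.log ((2 * Real.pi) ^ Fintype.card ι * S.det)
        + (x - m) ⬝ᵥ (S⁻¹ *ᵥ (x - m))) := by
  have := hS.det_pos
  rw [mvGaussianPDFReal, Real.log_mul (by positivity) (by positivity), Real.log_exp, Real.log_inv,
    Real.log_sqrt (by positivity)]
  ring

lemma mvGaussianPDFReal_zero_one (x : ι → ℝ) :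
    mvGaussianPDFReal 0 1 x = ∏ i, gaussianPDFReal 0 1 (x i) := by
  have hsqrt : √((2 * Real.pi) ^ Fintype.card ι) = √(2 * Real.pi) ^ Fintype.card ι := by
    rw [Real.sqrt_eq_iff_mul_self_eq (by positivity) (by positivity), ← mul_pow,
      Real.mul_self_sqrt (by positivity)]
  simp only [mvGaussianPDFReal, gaussianPDFReal, det_one, mul_one, inv_one, one_mulVec, sub_zero,
    NNReal.coe_one, hsqrt, Finset.prod_mul_distrib, Finset.prod_const, Finset.card_univ, inv_pow,
    ← Real.exp_sum, dotProduct, Finset.mul_sum]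
  congr! 3 with i
  ring

lemma mvGaussian_zero_one :
    mvGaussian 0 (1 : Matrix ι ι ℝ) = Measure.pi fun _ : ι ↦ gaussianReal 0 1 := by
  simp only [mvGaussian_eq_withDensity, mvGaussianPDFReal_zero_one,
    gaussianReal_of_var_ne_zero _ one_ne_zero, gaussianPDF_def]
  exact (pi_withDensity_ofReal (fun _ ↦ gaussianPDFReal_nonneg 0 1)
    fun _ ↦ integrable_gaussianPDFReal 0 1).symm

lemma mvGaussianPDFReal_add_mulVec (c m x : ι → ℝ) (S : Matrix ι ι ℝ) {B : Matrix ι ι ℝ}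
    (hB : B.det ≠ 0) :
    mvGaussianPDFReal (c + B *ᵥ m) (B * S * Bᵀ) (c + B *ᵥ x) =
      |B.det|⁻¹ * mvGaussianPDFReal m S x := by
  have hquad (v : ι → ℝ) : (B *ᵥ v) ⬝ᵥ ((B * S * Bᵀ)⁻¹ *ᵥ (B *ᵥ v)) = v ⬝ᵥ (S⁻¹ *ᵥ v) := by
    have hinv : Bᵀ * (B * S * Bᵀ)⁻¹ * B = S⁻¹ := by
      rw [Matrix.mul_inv_rev, Matrix.mul_inv_rev,
        mul_nonsing_inv_cancel_left _ _ (by simpa using hB.isUnit),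
        nonsing_inv_mul_cancel_right _ _ hB.isUnit]
    rw [← vecMul_transpose, ← dotProduct_mulVec, vecMul_transpose, mulVec_mulVec, mulVec_mulVec,
      hinv]
  have hsqrt : √((2 * Real.pi) ^ Fintype.card ι * (B * S * Bᵀ).det) =
      |B.det| * √((2 * Real.pi) ^ Fintype.card ι * S.det) := by
    rw [← Real.sqrt_sq_eq_abs, ← Real.sqrt_mul (sq_nonneg _), det_mul, det_mul, det_transpose]
    congr 1
    ring
  rw [mvGaussianPDFReal, add_sub_add_left_eq_sub, ← mulVec_sub, hquad, hsqrt, mul_inv, mul_assoc,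
    mvGaussianPDFReal]

lemma measurePreserving_add_mulVec (c : ι → ℝ) {B : Matrix ι ι ℝ} (hB : B.det ≠ 0) :
    MeasurePreserving (fun x ↦ c + B *ᵥ x) volume (ENNReal.ofReal |B.det⁻¹| • volume) := by
  have hB_map : MeasurePreserving (B *ᵥ ·) volume (ENNReal.ofReal |B.det⁻¹| • volume) :=
    ⟨Continuous.measurable (by fun_prop), Real.map_matrix_volume_pi_eq_smul_volume_pi hB⟩
  exact (measurePreserving_add_left (ENNReal.ofReal |B.det⁻¹| • volume) c).comp hB_map

lemma measurePreserving_add_mulVec_mvGaussian (c m : ι → ℝ) (S : Matrix ι ι ℝ) {B : Matrix ι ι ℝ}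
    (hB : B.det ≠ 0) :
    MeasurePreserving (fun x ↦ c + B *ᵥ x) (mvGaussian m S)
      (mvGaussian (c + B *ᵥ m) (B * S * Bᵀ)) := by
  have he := measurePreserving_add_mulVec c hB
  have hpdf := measurable_mvGaussianPDFReal (c + B *ᵥ m) (B * S * Bᵀ)
  refine ⟨he.measurable, ?_⟩
  have hcomp : (fun x ↦ ENNReal.ofReal (mvGaussianPDFReal m S x)) =
      (fun x ↦ ENNReal.ofReal (|B.det| * mvGaussianPDFReal (c + B *ᵥ m) (B * S * Bᵀ) x)) ∘
        fun x ↦ c + B *ᵥ x := by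
    ext x
    rw [Function.comp_apply, mvGaussianPDFReal_add_mulVec c m x S hB,
      mul_inv_cancel_left₀ (abs_ne_zero.2 hB)]
  rw [mvGaussian_eq_withDensity, mvGaussian_eq_withDensity, hcomp,
    map_withDensity_comp he (hpdf.const_mul _).ennreal_ofReal, withDensity_smul_measure,
    ← withDensity_smul _ (hpdf.const_mul _).ennreal_ofReal]
  congr with x
  rw [Pi.smul_apply, smul_eq_mul, ← ENNReal.ofReal_mul (abs_nonneg _), abs_inv,
    inv_mul_cancel_left₀ (abs_ne_zero.2 hB)]

open scoped MatrixOrder in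
lemma measurePreserving_toLp_mvGaussian (m : ι → ℝ) (hS : S.PosDef) :
    MeasurePreserving (toLp 2) (mvGaussian m S) (multivariateGaussian (toLp 2 m) S) := by
  have hsq : CFC.sqrt S * CFC.sqrt S = S := CFC.sqrt_mul_sqrt_self _ hS.posSemidef.nonneg
  have hsymm : (CFC.sqrt S)ᵀ = CFC.sqrt S := by
    have := (CFC.sqrt_nonneg S).isSelfAdjoint
    rwa [IsSelfAdjoint, star_eq_conjTranspose, conjTranspose_eq_transpose_of_trivial] at this
  have hdet : (CFC.sqrt S).det ≠ 0 := by
    refine left_ne_zero_of_mul (b := (CFC.sqrt S).det) ?_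
    rw [← det_mul, hsq]
    exact hS.det_pos.ne'
  have haffine := measurePreserving_add_mulVec_mvGaussian m 0 1 hdet
  rw [mulVec_zero, add_zero, mul_one, hsymm, hsq] at haffine
  refine ⟨by fun_prop, ?_⟩
  rw [← haffine.map_eq, multivariateGaussian, ← map_pi_eq_stdGaussian, mvGaussian_zero_one,
    Measure.map_map (by fun_prop) haffine.measurable, Measure.map_map (by fun_prop) (by fun_prop)]
  congr 1

lemma measurePreserving_ofLp_multivariateGaussian (m : ι → ℝ) (hS : S.PosDef) :
    MeasurePreserving ofLp (multivariateGaussian (toLp 2 m) S) (mvGaussian m S) :=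
  (measurePreserving_toLp_mvGaussian m hS).symm (MeasurableEquiv.toLp 2 (ι → ℝ))

end MvGaussian

lemma posSemidef_mul_mul_transpose {ι κ : Type*} [Finite ι] [Fintype κ] {S : Matrix κ κ ℝ}
    (hS : S.PosSemidef) (H : Matrix ι κ ℝ) :
    (H * S * Hᵀ).PosSemidef :=
  conjTranspose_eq_transpose_of_trivial H ▸ hS.mul_mul_conjTranspose_same H

section QuadraticForm

variable {ι κ : Type*} [Fintype ι] [Fintype κ]

lemma dotProduct_sub_mulVec_sub {R : Type*} [CommRing R] (A : Matrix ι ι R) (x m : ι → R) :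
    (x - m) ⬝ᵥ (A *ᵥ (x - m)) = ∑ i, ∑ j, A i j * ((x i - m i) * (x j - m j)) := by
  simp only [dotProduct, mulVec, Finset.mul_sum, Pi.sub_apply]
  exact Finset.sum_congr rfl fun i _ ↦ Finset.sum_congr rfl fun j _ ↦ by ring

lemma dotProduct_mul_mul_transpose_mulVec {R : Type*} [CommSemiring R] (S : Matrix κ κ R)
    (H : Matrix ι κ R) (t : ι → R) :
    t ⬝ᵥ (H * S * Hᵀ) *ᵥ t = (Hᵀ *ᵥ t) ⬝ᵥ S *ᵥ (Hᵀ *ᵥ t) := by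
  rw [mulVec_transpose, ← dotProduct_mulVec, ← mulVec_transpose, mulVec_mulVec, mulVec_mulVec]

lemma inner_toLp_mulVec_left (H : Matrix ι κ ℝ) (y : EuclideanSpace ℝ κ) (t : EuclideanSpace ℝ ι) :
    inner ℝ (toLp 2 (H *ᵥ ofLp y)) t = inner ℝ y (toLp 2 (Hᵀ *ᵥ ofLp t)) := by
  simp only [EuclideanSpace.inner_eq_star_dotProduct, star_trivial]
  rw [mulVec_transpose, dotProduct_mulVec]

end QuadraticForm

section MultivariateGaussian

variable {ι κ : Type*} [Fintype ι] [DecidableEq ι] [Fintype κ] [DecidableEq κ]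
  {m : EuclideanSpace ℝ ι} {S : Matrix ι ι ℝ}

lemma integrable_eval_sub_mul_eval_sub_multivariateGaussian (m : EuclideanSpace ℝ ι)
    (S : Matrix ι ι ℝ) (i j : ι) :
    Integrable (fun x : EuclideanSpace ℝ ι ↦ (x i - m i) * (x j - m j))
      (multivariateGaussian m S) := by
  have hmem (k : ι) : MemLp (fun x : EuclideanSpace ℝ ι ↦ x k - m k) 2
      (multivariateGaussian m S) :=
    ((EuclideanSpace.proj k : EuclideanSpace ℝ ι →L[ℝ] ℝ).comp_memLp' IsGaussian.memLp_two_id).sub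
      (memLp_const _)
  exact (hmem i).integrable_mul (hmem j)

lemma integral_eval_sub_mul_eval_sub_multivariateGaussian (hS : S.PosSemidef) (i j : ι) :
    ∫ x : EuclideanSpace ℝ ι, (x i - m i) * (x j - m j) ∂multivariateGaussian m S = S i j := by
  have hmean (k : ι) : ∫ x : EuclideanSpace ℝ ι, x k ∂multivariateGaussian m S = m k := by
    simpa using (EuclideanSpace.proj k : EuclideanSpace ℝ ι →L[ℝ] ℝ).integral_comp_id_comm
      (IsGaussian.integrable_id (μ := multivariateGaussian m S))
  rw [← covariance_eval_multivariateGaussian (μ := m) hS i j, covariance, hmean, hmean]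

lemma integrable_quadraticForm_multivariateGaussian (m : EuclideanSpace ℝ ι) (S A : Matrix ι ι ℝ) :
    Integrable (fun x ↦ (ofLp x - ofLp m) ⬝ᵥ (A *ᵥ (ofLp x - ofLp m)))
      (multivariateGaussian m S) := by
  simp only [dotProduct_sub_mulVec_sub]
  exact integrable_finsetSum _ fun i _ ↦ integrable_finsetSum _ fun j _ ↦
    (integrable_eval_sub_mul_eval_sub_multivariateGaussian m S i j).const_mul _

lemma integral_quadraticForm_multivariateGaussian (hS : S.PosSemidef) (A : Matrix ι ι ℝ) :
    ∫ x, (ofLp x - ofLp m) ⬝ᵥ (A *ᵥ (ofLp x - ofLp m)) ∂multivariateGaussian m S =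
      (A * S).trace := by
  have hint (i j : ι) : Integrable (fun x : EuclideanSpace ℝ ι ↦
      A i j * ((x i - m i) * (x j - m j))) (multivariateGaussian m S) :=
    (integrable_eval_sub_mul_eval_sub_multivariateGaussian m S i j).const_mul _
  have hsymm (i j : ι) : S i j = S j i := by simpa using (hS.isHermitian.apply i j).symm
  simp only [dotProduct_sub_mulVec_sub, trace, diag_apply, mul_apply]
  rw [integral_finsetSum _ fun i _ ↦ integrable_finsetSum _ fun j _ ↦ hint i j]
  refine Finset.sum_congr rfl fun i _ ↦ ?_
  rw [integral_finsetSum _ fun j _ ↦ hint i j]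
  refine Finset.sum_congr rfl fun j _ ↦ ?_
  rw [integral_const_mul, integral_eval_sub_mul_eval_sub_multivariateGaussian hS, hsymm i j]

lemma measurePreserving_mulVec_multivariateGaussian (m : EuclideanSpace ℝ κ) {S : Matrix κ κ ℝ}
    (hS : S.PosSemidef) (H : Matrix ι κ ℝ) :
    MeasurePreserving (fun y : EuclideanSpace ℝ κ ↦ toLp 2 (H *ᵥ ofLp y))
      (multivariateGaussian m S)
      (multivariateGaussian (toLp 2 (H *ᵥ ofLp m)) (H * S * Hᵀ)) := by
  have hmeas : Measurable fun y : EuclideanSpace ℝ κ ↦ toLp 2 (H *ᵥ ofLp y) :=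
    Continuous.measurable (by fun_prop)
  have := Measure.isProbabilityMeasure_map (μ := multivariateGaussian m S) hmeas.aemeasurable
  refine ⟨hmeas, Measure.ext_of_charFun ?_⟩
  ext t
  have hadjoint : charFun ((multivariateGaussian m S).map fun y ↦ toLp 2 (H *ᵥ ofLp y)) t =
      charFun (multivariateGaussian m S) (toLp 2 (Hᵀ *ᵥ ofLp t)) := by
    rw [charFun_apply, charFun_apply, integral_map hmeas.aemeasurable (by fun_prop)]
    simp only [inner_toLp_mulVec_left]
  rw [hadjoint, charFun_multivariateGaussian hS,
    charFun_multivariateGaussian (posSemidef_mul_mul_transpose hS H),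
    dotProduct_mul_mul_transpose_mulVec, real_inner_comm, ← inner_toLp_mulVec_left, real_inner_comm]

lemma multivariateGaussian_conv (m m' : EuclideanSpace ℝ ι) {S S' : Matrix ι ι ℝ}
    (hS : S.PosSemidef) (hS' : S'.PosSemidef) :
    multivariateGaussian m S ∗ multivariateGaussian m' S' =
      multivariateGaussian (m + m') (S + S') := by
  refine Measure.ext_of_charFun ?_
  ext t
  rw [charFun_conv, charFun_multivariateGaussian hS, charFun_multivariateGaussian hS',
    charFun_multivariateGaussian (hS.add hS'), ← Complex.exp_add, inner_add_right, add_mulVec,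
    dotProduct_add]
  push_cast
  ring_nf

end MultivariateGaussian

section Entropy

variable {ι : Type*} [Fintype ι] [DecidableEq ι] {S : Matrix ι ι ℝ}

lemma integrable_quadraticForm_mvGaussian (m : ι → ℝ) (hS : S.PosDef) :
    Integrable (fun x ↦ (x - m) ⬝ᵥ (S⁻¹ *ᵥ (x - m))) (mvGaussian m S) := by
  have hint := integrable_quadraticForm_multivariateGaussian (toLp 2 m) S S⁻¹
  rw [← (measurePreserving_toLp_mvGaussian m hS).map_eq] at hint
  exact hint.comp_measurable (by fun_prop)

lemma integral_quadraticForm_mvGaussian (m : ι → ℝ) (hS : S.PosDef) :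
    ∫ x, (x - m) ⬝ᵥ (S⁻¹ *ᵥ (x - m)) ∂mvGaussian m S = Fintype.card ι := by
  rw [← trace_one (n := ι) (R := ℝ), ← nonsing_inv_mul S hS.det_pos.ne'.isUnit,
    ← integral_quadraticForm_multivariateGaussian (m := toLp 2 m) hS.posSemidef]
  exact (measurePreserving_toLp_mvGaussian m hS).integral_comp
    (MeasurableEquiv.toLp 2 (ι → ℝ)).measurableEmbedding
    fun x ↦ (ofLp x - m) ⬝ᵥ (S⁻¹ *ᵥ (ofLp x - m))

lemma isProbabilityMeasure_mvGaussian (m : ι → ℝ) (hS : S.PosDef) :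
    IsProbabilityMeasure (mvGaussian m S) :=
  (measurePreserving_toLp_mvGaussian m hS).hasLaw.isProbabilityMeasure

lemma integrable_log_mvGaussianPDFReal (m : ι → ℝ) (hS : S.PosDef) :
    Integrable (fun x ↦ Real.log (mvGaussianPDFReal m S x)) (mvGaussian m S) := by
  have := isProbabilityMeasure_mvGaussian m hS
  simp only [log_mvGaussianPDFReal m hS]
  exact ((integrable_const _).add (integrable_quadraticForm_mvGaussian m hS)).const_mul _

theorem differentialEntropy_mvGaussianPDFReal (m : ι → ℝ) (hS : S.PosDef) :
    differentialEntropy volume (mvGaussianPDFReal m S) =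
      1 / 2 * Real.log ((2 * Real.pi * Real.exp 1) ^ Fintype.card ι * S.det) := by
  have := isProbabilityMeasure_mvGaussian m hS
  have hdet := hS.det_pos
  rw [differentialEntropy, ← mvGaussian_eq_withDensity]
  simp only [log_mvGaussianPDFReal m hS]
  rw [integral_const_mul,
    integral_add (integrable_const _) (integrable_quadraticForm_mvGaussian m hS),
    integral_quadraticForm_mvGaussian m hS, integral_const, probReal_univ, one_smul,
    mul_pow _ (Real.exp 1), Real.exp_one_pow, mul_right_comm,
    Real.log_mul (x := _ * _) (by positivity) (by positivity), Real.log_exp]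
  ring

lemma differentialEntropy_mvGaussianPDFReal_sub (m m' : ι → ℝ) {S S' : Matrix ι ι ℝ}
    (hS : S.PosDef) (hS' : S'.PosDef) :
    differentialEntropy volume (mvGaussianPDFReal m S) -
        differentialEntropy volume (mvGaussianPDFReal m' S') =
      1 / 2 * Real.log (S.det / S'.det) := by
  have hdet := hS.det_pos
  have hdet' := hS'.det_pos
  rw [differentialEntropy_mvGaussianPDFReal m hS, differentialEntropy_mvGaussianPDFReal m' hS',
    ← mul_sub, ← Real.log_div (by positivity) (by positivity), mul_div_mul_left _ _ (by positivity)]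

end Entropy

section LinearChannel

variable {Ω ι κ : Type*} [MeasurableSpace Ω] [Fintype ι] [DecidableEq ι] [Fintype κ] [DecidableEq κ]
  {P : Measure Ω} {SY : Matrix κ κ ℝ} {Sn : Matrix ι ι ℝ} {Y : Ω → κ → ℝ} {n : Ω → ι → ℝ}

lemma hasLaw_mulVec_add {mY : EuclideanSpace ℝ κ} {mn : EuclideanSpace ℝ ι}
    (hSY : SY.PosSemidef) (hSn : Sn.PosSemidef) (H : Matrix ι κ ℝ)
    (hY : HasLaw (fun ω ↦ toLp 2 (Y ω)) (multivariateGaussian mY SY) P)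
    (hn : HasLaw (fun ω ↦ toLp 2 (n ω)) (multivariateGaussian mn Sn) P)
    (hindep : IndepFun Y n P) :
    HasLaw (fun ω ↦ toLp 2 (H *ᵥ Y ω + n ω))
      (multivariateGaussian (toLp 2 (H *ᵥ ofLp mY) + mn) (H * SY * Hᵀ + Sn)) P := by
  have hHY := (measurePreserving_mulVec_multivariateGaussian mY hSY H).fun_comp_hasLaw hY
  have hindep' : IndepFun (fun ω ↦ toLp 2 (H *ᵥ Y ω)) (fun ω ↦ toLp 2 (n ω)) P :=
    hindep.comp (φ := fun y ↦ toLp 2 (H *ᵥ y)) (ψ := toLp 2) (Continuous.measurable (by fun_prop))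
      (by fun_prop)
  rw [← multivariateGaussian_conv _ _ (posSemidef_mul_mul_transpose hSY H) hSn]
  exact hindep'.hasLaw_fun_add hHY hn

/-- The law of `Y` is Mathlib's `multivariateGaussian` because `SY` may be singular, in which case
`mvGaussian` is the zero measure. -/
theorem miRV_gaussian_linear_channel_general {mY : EuclideanSpace ℝ κ} {mn : ι → ℝ}
    (hSY : SY.PosSemidef) (hSn : Sn.PosDef) (H : Matrix ι κ ℝ)
    (hY : HasLaw (fun ω ↦ toLp 2 (Y ω)) (multivariateGaussian mY SY) P)
    (hn : HasLaw n (mvGaussian mn Sn) P) (hindep : IndepFun Y n P) :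
    miRV P (fun ω ↦ H *ᵥ Y ω + n ω) Y =
      ((1 / 2 * Real.log ((H * SY * Hᵀ + Sn).det / Sn.det) : ℝ) : EReal) := by
  have := hY.isProbabilityMeasure
  have hY_meas : AEMeasurable Y P :=
    (MeasurableEquiv.toLp 2 (κ → ℝ)).symm.measurable.comp_aemeasurable hY.aemeasurable
  have hT : (H * SY * Hᵀ + Sn).PosDef := hSn.posSemidef_add (posSemidef_mul_mul_transpose hSY H)
  have hX : HasLaw (fun ω ↦ H *ᵥ Y ω + n ω)
      (mvGaussian (H *ᵥ ofLp mY + mn) (H * SY * Hᵀ + Sn)) P :=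
    (measurePreserving_ofLp_multivariateGaussian _ hT).fun_comp_hasLaw <|
      hasLaw_mulVec_add hSY hSn.posSemidef H hY
        ((measurePreserving_toLp_mvGaussian mn hSn).fun_comp_hasLaw hn) hindep
  rw [← differentialEntropy_mvGaussianPDFReal_sub (H *ᵥ ofLp mY + mn) mn hT hSn]
  exact miRV_add_eq_differentialEntropy_sub (f := (H *ᵥ ·)) (Continuous.measurable (by fun_prop))
    (measurable_mvGaussianPDFReal _ _) (measurable_mvGaussianPDFReal _ _)
    (mvGaussianPDFReal_pos _ hT) hY_meas hn hX hindep
    (integrable_log_mvGaussianPDFReal _ hSn) (integrable_log_mvGaussianPDFReal _ hT)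

end LinearChannel

end

/-- **Mutual information of a Gaussian linear channel**: if `Y ~ N(0, Σ_Y)` and
`n ~ N(0, Σ_n)` are independent with `Σ_Y, Σ_n` positive definite, and `X = H Y + n`,
then `I(X; Y) = (1/2) · log(det(H Σ_Y Hᵀ + Σ_n) / det Σ_n)`. -/
theorem miRV_gaussian_linear_channel
    {Ω : Type*} [MeasurableSpace Ω] (ℙ : Measure Ω) [IsProbabilityMeasure ℙ]
    {d dY : ℕ} (SY : Matrix (Fin dY) (Fin dY) ℝ) (hSY : SY.PosDef)
    (Sn : Matrix (Fin d) (Fin d) ℝ) (hSn : Sn.PosDef)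
    (H : Matrix (Fin d) (Fin dY) ℝ)
    (Y : Ω → (Fin dY → ℝ)) (n : Ω → (Fin d → ℝ))
    (hY : Measurable Y) (hn : Measurable n)
    (hlawY : ℙ.map Y = mvGaussian 0 SY) (hlawn : ℙ.map n = mvGaussian 0 Sn)
    (hindep : ProbabilityTheory.IndepFun Y n ℙ) :
    miRV ℙ (fun ω => H *ᵥ Y ω + n ω) Y
      = ((1/2 * Real.log ((H * SY * Hᵀ + Sn).det / Sn.det) : ℝ) : EReal) :=
  miRV_gaussian_linear_channel_general hSY.posSemidef hSn H
    ((measurePreserving_toLp_mvGaussian 0 hSY).comp_hasLaw ⟨hY.aemeasurable, hlawY⟩)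
    ⟨hn.aemeasurable, hlawn⟩ hindep
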